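/- arXiv:1511.01132 — 2 statements merged into one kernel-verified Lean document; each statement's English description precedes it below -/
import Mathlib

section
/- (Revenue is bounded by Liquid Welfare under no over-bidding and no over-budgeting) Consider the share model with n bidders with additive values v_{ij} ≥ 0 and budgets B_i ≥ 0 over m items each divided into h identical shares, where every share is awarded to a bidder with the highest bid on it. If a pure bid profile b satisfies no over-bidding (each bidder i's bid on any share of item j is at most v_{ij}/h) and no over-budgeting (each bidder i's bids sum to at most B_i), then the sum over all shares of the highest bid is at most the Liquid Welfare: Σ_{j=1}^m Σ_{ℓ=1}^h max_i b_{ij}^ℓ ≤ Σ_i min{v_i(x_i(b)), B_i} = LW(b). -/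
/-!
In the share model, if a pure bid profile satisfies no over-bidding (each bid on
a share of item `j` is at most `v i j / h`) and no over-budgeting (each bidder's
bids sum to at most her budget), then the sum over all shares of the highest bid
is at most the Liquid Welfare of the resulting allocation.
-/

open Finset

section Auction

variable {ι α M : Type*}

theorem fold_max_eq_of_forall_le [LinearOrder M] {s : Finset ι} {f : ι → M} {c : M} {i : ι}
    (hi : i ∈ s) (hc : c ≤ f i) (hf : ∀ k ∈ s, f k ≤ f i) : s.fold max c f = f i :=
  le_antisymm ((fold_max_le _).2 ⟨hc, hf⟩) ((le_fold_max _).2 (.inr ⟨i, hi, le_rfl⟩))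

variable [Fintype α]

/-- The bundle `x_i` of goods that bidder `i` wins when each good `g` is awarded to `win g`. -/
def wonGoods [DecidableEq ι] (win : α → ι) (i : ι) : Finset α := {g | win g = i}

theorem mem_wonGoods [DecidableEq ι] {win : α → ι} {i : ι} {g : α} :
    g ∈ wonGoods win i ↔ win g = i :=
  mem_filter_univ g

variable [Fintype ι] [AddCommMonoid M]

theorem sum_sum_wonGoods [DecidableEq ι] (b : ι → α → M) (win : α → ι) :
    ∑ i, ∑ g ∈ wonGoods win i, b i g = ∑ g, b (win g) g :=
  calc ∑ i, ∑ g ∈ wonGoods win i, b i g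
    _ = ∑ i, ∑ g ∈ wonGoods win i, b (win g) g :=
        sum_congr rfl fun i _ => sum_congr rfl fun g hg => by rw [mem_wonGoods.1 hg]
    _ = ∑ g, b (win g) g := sum_fiberwise univ win fun g => b (win g) g

variable [LinearOrder M]

/-- The revenue of the bid profile `b`: the sum over all goods of the highest bid. The fold starts
at `0`, so a good on which every bid is negative contributes `0`. -/
def revenue (b : ι → α → M) : M :=
  ∑ g, univ.fold max 0 fun i => b i g

theorem revenue_eq_sum_winning_bid {b : ι → α → M} {win : α → ι} (hb : ∀ g, 0 ≤ b (win g) g)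
    (hwin : ∀ g i, b i g ≤ b (win g) g) : revenue b = ∑ g, b (win g) g :=
  sum_congr rfl fun g _ =>
    fold_max_eq_of_forall_le (f := (b · g)) (mem_univ _) (hb g) fun i _ => hwin g i

variable [DecidableEq ι]

/-- The Liquid Welfare of the allocation `win`, for budgets `B`. The valuation `v i` of bidder `i`
is an arbitrary set function on bundles, not necessarily additive. -/
def liquidWelfare (v : ι → Finset α → M) (B : ι → M) (win : α → ι) : M :=
  ∑ i, min (v i (wonGoods win i)) (B i)

variable [IsOrderedAddMonoid M]

/-- The revenue is the sum of the winning bids; grouped by winner, each bidder contributes her bids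
on the goods she wins, which both her value for these goods and her budget bound from above. -/
theorem revenue_le_liquid_welfare_general {v : ι → Finset α → M} {B : ι → M} {b : ι → α → M}
    {win : α → ι} (hb : ∀ i g, 0 ≤ b i g) (hwin : ∀ g i, b i g ≤ b (win g) g)
    (hNOB : ∀ i, ∑ g ∈ wonGoods win i, b i g ≤ v i (wonGoods win i))
    (hNBD : ∀ i, ∑ g, b i g ≤ B i) : revenue b ≤ liquidWelfare v B win :=
  calc revenue b
    _ = ∑ g, b (win g) g := revenue_eq_sum_winning_bid (fun g => hb (win g) g) hwin
    _ = ∑ i, ∑ g ∈ wonGoods win i, b i g := (sum_sum_wonGoods b win).symm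
    _ ≤ liquidWelfare v B win := sum_le_sum fun i _ =>
        le_min (hNOB i) ((sum_le_univ_sum_of_nonneg (hb i)).trans (hNBD i))

end Auction

/-- **Revenue is bounded by Liquid Welfare.**  `n` bidders with additive values
`v i j ≥ 0` and budgets `B i ≥ 0`; `m` items each divided into `h` shares; bids
`b i j ℓ ≥ 0` on every share; `win` awards every share to a bidder with the
highest bid on it.  Under no over-bidding and no over-budgeting, the sum of the
highest bids over all shares is at most `LW(b) = Σ_i min{v_i(x_i(b)), B_i}`. -/
theorem revenue_le_liquid_welfare (n m h : ℕ)
    (v : Fin n → Fin m → ℝ) (hv : ∀ i j, 0 ≤ v i j)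
    (B : Fin n → ℝ) (hB : ∀ i, 0 ≤ B i)
    (b : Fin n → Fin m → Fin h → ℝ) (hb : ∀ i j ℓ, 0 ≤ b i j ℓ)
    (win : Fin m → Fin h → Fin n)
    (hwin : ∀ (j : Fin m) (ℓ : Fin h) (i : Fin n), b i j ℓ ≤ b (win j ℓ) j ℓ)
    (hNOB : ∀ (i : Fin n) (j : Fin m) (ℓ : Fin h), b i j ℓ ≤ v i j / h)
    (hNBD : ∀ i : Fin n, (∑ j : Fin m, ∑ ℓ : Fin h, b i j ℓ) ≤ B i) :
    ∑ j : Fin m, ∑ ℓ : Fin h, Finset.fold max 0 (fun i => b i j ℓ) univ ≤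
      ∑ i : Fin n,
        min (∑ j : Fin m, ∑ ℓ : Fin h, if win j ℓ = i then v i j / h else 0) (B i) := by
  simpa only [revenue, liquidWelfare, wonGoods, sum_filter, Fintype.sum_prod_type] using
    revenue_le_liquid_welfare_general (v := fun i S => ∑ g ∈ S, v i g.1 / h) (B := B)
      (b := fun i (g : Fin m × Fin h) => b i g.1 g.2) (win := fun g => win g.1 g.2)
      (fun i g => hb i g.1 g.2) (fun g i => hwin g.1 g.2 i)
      (fun i => sum_le_sum fun g _ => hNOB i g.1 g.2)
      (fun i => by simpa only [Fintype.sum_prod_type] using hNBD i)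
end

section
/- For every ε with 0 < ε < 1 there exist a simultaneous second price auction with 2 bidders and 2 indivisible items with additive valuations and budgets, and a pure Nash equilibrium b within the class of strategies satisfying no over-bidding and no over-budgeting (b itself satisfies both, and no bidder can increase her utility by any deviation satisfying both), such that OPT ≥ (2 − ε) · LW(b). Hence the bound LW(b) ≥ OPT/2 for pure Nash equilibria of simultaneous second price auctions is tight. -/
/-!
Tightness of the factor-2 Liquid Welfare guarantee for pure Nash equilibria of
simultaneous second price auctions: for every `0 < ε < 1` there is a 2-bidder,
2-item auction with additive valuations and budgets admitting a pure Nash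
equilibrium `b` (within the class of no over-bidding, no over-budgeting
strategies) with `OPT ≥ (2 − ε) · LW(b)`.
-/

open Finset

/-- A simultaneous second price auction on `m` indivisible items with `n` bidders:
monotone normalized valuations `v i`, budgets `B i ≥ 0`, and a deterministic
allocation rule `win` awarding every item to a bidder with the highest bid on it;
the winner of an item pays the highest competing bid on it. -/
structure ItemAuctionSP (n m : ℕ) where
  v : Fin n → Finset (Fin m) → ℝ
  v_empty : ∀ i, v i ∅ = 0
  v_mono : ∀ i (S T : Finset (Fin m)), S ⊆ T → v i S ≤ v i T
  B : Fin n → ℝ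
  B_nonneg : ∀ i, 0 ≤ B i
  win : (Fin n → Fin m → ℝ) → Fin m → Fin n
  win_max : ∀ (b : Fin n → Fin m → ℝ) (j : Fin m) (i : Fin n), b i j ≤ b (win b j) j

namespace ItemAuctionSP

variable {n m : ℕ}

/-- The highest competing bid `max_{k ≠ i} b_{kj}` (bids are nonnegative). -/
noncomputable def maxOther (b : Fin n → Fin m → ℝ) (i : Fin n) (j : Fin m) : ℝ :=
  Finset.fold max 0 (fun k => b k j) (univ.erase i)

/-- The set of items bidder `i` wins under profile `b`. -/
def won (A : ItemAuctionSP n m) (i : Fin n) (b : Fin n → Fin m → ℝ) : Finset (Fin m) :=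
  univ.filter fun j => A.win b j = i

/-- Second-price payment of bidder `i`: the highest competing bid on each item won. -/
noncomputable def pay (A : ItemAuctionSP n m) (i : Fin n) (b : Fin n → Fin m → ℝ) : ℝ :=
  ∑ j ∈ A.won i b, maxOther b i j

/-- Quasilinear utility of bidder `i`. -/
noncomputable def util (A : ItemAuctionSP n m) (i : Fin n) (b : Fin n → Fin m → ℝ) : ℝ :=
  A.v i (A.won i b) - A.pay i b

/-- Liquid Welfare of a pure bid profile. -/
noncomputable def LW (A : ItemAuctionSP n m) (b : Fin n → Fin m → ℝ) : ℝ :=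
  ∑ i, min (A.v i (A.won i b)) (A.B i)

/-- No over-bidding: `Σ_{j∈S} b_{ij} ≤ v_i(S)` for every set `S`. -/
def NoOverbid (A : ItemAuctionSP n m) (i : Fin n) (bi : Fin m → ℝ) : Prop :=
  ∀ S : Finset (Fin m), ∑ j ∈ S, bi j ≤ A.v i S

/-- No over-budgeting: bids sum to at most the budget. -/
def NoOverbudget (A : ItemAuctionSP n m) (i : Fin n) (bi : Fin m → ℝ) : Prop :=
  (∑ j : Fin m, bi j) ≤ A.B i

end ItemAuctionSP

/-!
A bidder's prices do not depend on her own bid, so with additive valuations she best responds as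
soon as she wins no item worth less than its price and loses none worth more. Take item values
`(1, 1)` and `(1, 0)` and unit budgets. Bidder `0` bids `(1, 0)`, bidder `1` bids `(0, 0)`, and ties
favour bidder `0`, who gets both items for free while pricing bidder `1` out of item `0`.
The winner's budget caps the liquid welfare at `1`, whereas giving item `0` to bidder `1` and
item `1` to bidder `0` yields `2`. So the factor `2` is attained exactly, even without restricting
the deviations.
-/

namespace ItemAuctionSP

section General

variable {n m : ℕ} {A : ItemAuctionSP n m} {i : Fin n} {w : Fin m → ℝ}

/-- Additive valuations: each bidder has nonnegative item values, and a bundle is worth the sum of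
the values of its items. -/
def IsAdditive (A : ItemAuctionSP n m) : Prop :=
  ∀ i, ∃ w : Fin m → ℝ, (∀ j, 0 ≤ w j) ∧ ∀ S, A.v i S = ∑ j ∈ S, w j

/-- Pure Nash equilibrium of the unrestricted auction: deviations may be arbitrary nonnegative
bids, including those that overbid or exceed the budget. -/
def IsPureNash (A : ItemAuctionSP n m) (b : Fin n → Fin m → ℝ) : Prop :=
  ∀ i (b' : Fin m → ℝ), (∀ j, 0 ≤ b' j) → A.util i (Function.update b i b') ≤ A.util i b

/-- Liquid welfare of an allocation, encoded as the map sending each item to its owner; `OPT` is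
its maximum over all allocations, and `A.LW b` is its value at `A.win b`. -/
noncomputable def allocLW (A : ItemAuctionSP n m) (alloc : Fin m → Fin n) : ℝ :=
  ∑ i, min (A.v i (univ.filter fun j => alloc j = i)) (A.B i)

lemma LW_eq_allocLW_win (A : ItemAuctionSP n m) (b : Fin n → Fin m → ℝ) :
    A.LW b = A.allocLW (A.win b) :=
  rfl

lemma maxOther_update_self (b : Fin n → Fin m → ℝ) (i : Fin n) (b' : Fin m → ℝ) (j : Fin m) :
    maxOther (Function.update b i b') i j = maxOther b i j :=
  Finset.fold_congr fun k hk => by rw [Function.update_of_ne (ne_of_mem_erase hk)]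

lemma util_eq_sum_won (hv : ∀ S, A.v i S = ∑ j ∈ S, w j) (b : Fin n → Fin m → ℝ) :
    A.util i b = ∑ j ∈ A.won i b, (w j - maxOther b i j) := by
  rw [util, pay, hv, sum_sub_distrib]

lemma noOverbid_of_le (hv : ∀ S, A.v i S = ∑ j ∈ S, w j) {bi : Fin m → ℝ} (h : bi ≤ w) :
    A.NoOverbid i bi := fun S => by
  rw [hv]
  exact sum_le_sum fun j _ => h j

lemma util_update_le_of_won_of_lost (hv : ∀ S, A.v i S = ∑ j ∈ S, w j) {b : Fin n → Fin m → ℝ}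
    (hwon : ∀ j ∈ A.won i b, maxOther b i j ≤ w j)
    (hlost : ∀ j ∉ A.won i b, w j ≤ maxOther b i j) (b' : Fin m → ℝ) :
    A.util i (Function.update b i b') ≤ A.util i b := by
  simp only [util_eq_sum_won hv, maxOther_update_self]
  rw [← sum_sdiff_le_sum_sdiff]
  calc ∑ j ∈ A.won i (Function.update b i b') \ A.won i b, (w j - maxOther b i j)
      ≤ 0 := sum_nonpos fun j hj => sub_nonpos.2 (hlost j (mem_sdiff.1 hj).2)
    _ ≤ ∑ j ∈ A.won i b \ A.won i (Function.update b i b'), (w j - maxOther b i j) :=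
        sum_nonneg fun j hj => sub_nonneg.2 (hwon j (mem_sdiff.1 hj).1)

lemma maxOther_fin_two (b : Fin 2 → Fin m → ℝ) (i : Fin 2) (j : Fin m) :
    maxOther b i j = max (b i.rev j) 0 := by
  have hothers : univ.erase i = {i.rev} := by decide +revert
  rw [maxOther, hothers, fold_singleton]

/-- The two-bidder auction with additive valuations given by the item values `w`, in which ties are
broken in favour of bidder `0`. -/
noncomputable def twoBidderAdditive (w : Fin 2 → Fin m → ℝ) (hw : ∀ i j, 0 ≤ w i j)
    (B : Fin 2 → ℝ) (hB : ∀ i, 0 ≤ B i) : ItemAuctionSP 2 m where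
  v i S := ∑ j ∈ S, w i j
  v_empty _ := sum_empty
  v_mono i _ _ h := sum_le_sum_of_subset_of_nonneg h fun j _ _ => hw i j
  B := B
  B_nonneg := hB
  win b j := if b 1 j ≤ b 0 j then 0 else 1
  win_max b j i := by
    revert i
    split_ifs with h
    · exact Fin.forall_fin_two.2 ⟨le_rfl, h⟩
    · exact Fin.forall_fin_two.2 ⟨(not_le.1 h).le, le_rfl⟩

lemma twoBidderAdditive_isAdditive (w : Fin 2 → Fin m → ℝ) (hw : ∀ i j, 0 ≤ w i j)
    (B : Fin 2 → ℝ) (hB : ∀ i, 0 ≤ B i) : (twoBidderAdditive w hw B hB).IsAdditive :=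
  fun i => ⟨w i, hw i, fun _ => rfl⟩

end General

/-- Item values of the tight instance, indexed by bidder and item. -/
def tightVal : Fin 2 → Fin 2 → ℝ := ![![1, 1], ![1, 0]]

/-- Equilibrium bids of the tight instance: bidder `0` spends her whole budget on item `0`. -/
def tightBid : Fin 2 → Fin 2 → ℝ := ![![1, 0], ![0, 0]]

lemma tightBid_nonneg : ∀ i j, 0 ≤ tightBid i j := by
  simp [Fin.forall_fin_two, tightBid]

lemma tightBid_le_tightVal (i : Fin 2) : tightBid i ≤ tightVal i := by
  intro j
  fin_cases i <;> fin_cases j <;> simp [tightBid, tightVal]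

/-- The tight instance: item values `tightVal`, unit budgets, ties in favour of bidder `0`. -/
noncomputable def tightAuction : ItemAuctionSP 2 2 :=
  twoBidderAdditive tightVal (fun i j => (tightBid_nonneg i j).trans (tightBid_le_tightVal i j))
    (fun _ => 1) fun _ => zero_le_one

lemma tightAuction_win_tightBid : tightAuction.win tightBid = fun _ => 0 := by
  ext j
  fin_cases j <;> simp [tightAuction, twoBidderAdditive, tightBid]

lemma mem_won_tightBid {i j : Fin 2} : j ∈ tightAuction.won i tightBid ↔ i = 0 := by
  simp only [won, tightAuction_win_tightBid, mem_filter, mem_univ, true_and, eq_comm]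

lemma tightBid_noOverbudget (i : Fin 2) : tightAuction.NoOverbudget i (tightBid i) := by
  fin_cases i <;> simp [NoOverbudget, tightAuction, twoBidderAdditive, tightBid]

lemma tightBid_isPureNash : tightAuction.IsPureNash tightBid := by
  intro i b' _
  refine util_update_le_of_won_of_lost (w := tightVal i) (fun _ => rfl)
    (fun j hj => ?_) (fun j hj => ?_) b'
  · obtain rfl : i = 0 := mem_won_tightBid.1 hj
    fin_cases j <;> simp [maxOther_fin_two, tightBid, tightVal]
  · obtain rfl : i = 1 := Fin.eq_one_of_ne_zero i (mem_won_tightBid.not.1 hj)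
    fin_cases j <;> simp [maxOther_fin_two, tightBid, tightVal]

lemma LW_tightBid : tightAuction.LW tightBid = 1 := by
  rw [LW_eq_allocLW_win, tightAuction_win_tightBid]
  simp [allocLW, tightAuction, twoBidderAdditive, tightVal]

lemma allocLW_tightAuction_swap : tightAuction.allocLW Fin.rev = 2 := by
  have hitems (i : Fin 2) : (univ.filter fun j : Fin 2 => j.rev = i) = {i.rev} := by
    decide +revert
  simp only [allocLW, hitems]
  norm_num [tightAuction, twoBidderAdditive, tightVal, Fin.rev]

end ItemAuctionSP

theorem second_price_lpoa_two_tight_general :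
    ∃ (A : ItemAuctionSP 2 2) (b : Fin 2 → Fin 2 → ℝ),
      A.IsAdditive ∧ (∀ i j, 0 ≤ b i j) ∧ (∀ i, A.NoOverbid i (b i)) ∧
      (∀ i, A.NoOverbudget i (b i)) ∧ A.IsPureNash b ∧ 0 < A.LW b ∧
      ∃ alloc : Fin 2 → Fin 2, 2 * A.LW b ≤ A.allocLW alloc := by
  open ItemAuctionSP in
  refine ⟨tightAuction, tightBid, twoBidderAdditive_isAdditive _ _ _ _, tightBid_nonneg,
    fun i => noOverbid_of_le (fun _ => rfl) (tightBid_le_tightVal i), tightBid_noOverbudget,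
    tightBid_isPureNash, ?_, Fin.rev, ?_⟩
  · rw [LW_tightBid]
    exact one_pos
  · rw [LW_tightBid, allocLW_tightAuction_swap, mul_one]

/-- **Tightness for simultaneous second price auctions**: for every
`0 < ε < 1` there are a simultaneous second price auction with `2` bidders and
`2` indivisible items, additive valuations and budgets, and a pure Nash
equilibrium `b` within the class of no over-bidding and no over-budgeting
strategies, such that some allocation has Liquid Welfare at least
`(2 − ε) · LW(b)`; hence `OPT ≥ (2 − ε) · LW(b)` and the bound
`LW(b) ≥ OPT/2` is tight. -/
theorem second_price_lpoa_two_tight (ε : ℝ) (hε0 : 0 < ε) (hε1 : ε < 1) :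
    ∃ (A : ItemAuctionSP 2 2) (b : Fin 2 → Fin 2 → ℝ),
      (∀ i, ∃ a : Fin 2 → ℝ, (∀ j, 0 ≤ a j) ∧
        ∀ S : Finset (Fin 2), A.v i S = ∑ j ∈ S, a j) ∧
      (∀ i j, 0 ≤ b i j) ∧
      (∀ i, A.NoOverbid i (b i)) ∧
      (∀ i, A.NoOverbudget i (b i)) ∧
      (∀ i (b' : Fin 2 → ℝ), (∀ j, 0 ≤ b' j) →
        A.NoOverbid i b' → A.NoOverbudget i b' →
        A.util i (Function.update b i b') ≤ A.util i b) ∧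
      ∃ alloc : Fin 2 → Fin 2,
        (2 - ε) * A.LW b ≤
          ∑ i, min (A.v i (univ.filter fun j => alloc j = i)) (A.B i) := by
  obtain ⟨A, b, hadd, hb, hbid, hbudget, hnash, hpos, alloc, hopt⟩ :=
    second_price_lpoa_two_tight_general
  exact ⟨A, b, hadd, hb, hbid, hbudget, fun i b' hb' _ _ => hnash i b' hb', alloc,
    (mul_le_mul_of_nonneg_right (sub_le_self 2 hε0.le) hpos.le).trans hopt⟩
end
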